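/- arXiv:cs/0612120 — 4 statements merged into one kernel-verified Lean document; each statement's English description precedes it below -/
import Mathlib

section
/- Let Σ be a set, 𝒜 a complete lattice satisfying the descending chain condition, together with a Galois insertion (α, γ) of 𝒜 into the dual lattice of Moore families on Σ, and F a set of finitary operations on ℘(Σ) such that either (i) for every Moore family ℳ, α(M(F(ℳ))) = α(M(F(γ(α(ℳ))))), or (ii) for every a ∈ 𝒜, S_F(γ(a)) lies in the image of γ. Let g ∈ F and suppose given, for each a ∈ 𝒜, a subset subRefiners_g(a) ⊆ Refiners_g^𝒜(a) such that subRefiners_g(a) = ∅ ⟺ Refiners_g^𝒜(a) = ∅. Then every finite sequence a₀ = a, a_{i+1} = refine_{f_i}^𝒜(S⃗_i, a_i), in which S⃗_i ∈ subRefiners_g(a_i) whenever f_i = g and S⃗_i ∈ Refiners_{f_i}^𝒜(a_i) whenever f_i ≠ g, that ends at an element a_n with subRefiners_g(a_n) = ∅ and Refiners_f^𝒜(a_n) = ∅ for every f ∈ F ∖ {g}, satisfies a_n = α(S_F(γ(a))). -/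
universe u v

variable {X : Type u} {A : Type v}

/-- A Moore family: a collection of subsets closed under arbitrary intersections. -/
def IsMoore (M : Set (Set X)) : Prop := ∀ S ⊆ M, ⋂₀ S ∈ M

/-- The least Moore family containing `C`. -/
def mClose (C : Set (Set X)) : Set (Set X) := ⋂₀ {M | IsMoore M ∧ C ⊆ M}

/-- A disjunctive Moore family: additionally closed under arbitrary unions. -/
def IsDisjMoore (M : Set (Set X)) : Prop := IsMoore M ∧ ∀ S ⊆ M, ⋃₀ S ∈ M

/-- The least disjunctive Moore family containing `C`. -/
def dClose (C : Set (Set X)) : Set (Set X) := ⋂₀ {M | IsDisjMoore M ∧ C ⊆ M}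

/-- The closure operator associated with a Moore family. -/
def mu (M : Set (Set X)) (S : Set X) : Set X := ⋂₀ {T | T ∈ M ∧ S ⊆ T}

/-- The partition (as a setoid) induced by a Moore family:
`s ≡ s'` iff `μ {s} = μ {s'}`. -/
def prS (M : Set (Set X)) : Setoid X :=
  ⟨fun s t => mu M {s} = mu M {t}, ⟨fun _ => rfl, Eq.symm, Eq.trans⟩⟩

/-- The Moore family of all `P`-saturated sets (unions of blocks of `P`). -/
def padS (P : Setoid X) : Set (Set X) := {S | ∀ s ∈ S, ∀ t, P.r s t → t ∈ S}

/-- `P` refines `Q`: every block of `P` is contained in a block of `Q`. -/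
def refines (P Q : Setoid X) : Prop := ∀ s t, P.r s t → Q.r s t

/-- A finitary operation on `℘(X)`: an arity `n` together with a map `℘(X)^n → ℘(X)`. -/
abbrev Op (X : Type u) := (n : ℕ) × ((Fin n → Set X) → Set X)

/-- The image `F(S)` of a set of operations on a collection of subsets. -/
def imageF (F : Set (Op X)) (S : Set (Set X)) : Set (Set X) :=
  {T | ∃ f ∈ F, ∃ args : Fin f.1 → Set X, (∀ i, args i ∈ S) ∧ T = f.2 args}

/-- Forward `F`-completeness: `F(S) ⊆ S`. -/
def FComplete (F : Set (Op X)) (S : Set (Set X)) : Prop := imageF F S ⊆ S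

/-- The forward `F`-complete shell: the least forward `F`-complete Moore family
containing `M`. -/
def shellF (F : Set (Op X)) (M : Set (Set X)) : Set (Set X) :=
  ⋂₀ {B | IsMoore B ∧ FComplete F B ∧ M ⊆ B}

/-- Predecessor operator of a transition relation. -/
def preR (r : X → X → Prop) (S : Set X) : Set X := {s | ∃ t ∈ S, r s t}

/-- The split of a partition `P` by a set `T`: blocks are the nonempty sets
among `B ∩ T` and `B \ T` for blocks `B` of `P`. -/
def splitS (T : Set X) (P : Setoid X) : Setoid X :=
  ⟨fun s t => P.r s t ∧ (s ∈ T ↔ t ∈ T),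
   ⟨fun s => ⟨P.iseqv.refl s, Iff.rfl⟩,
    fun h => ⟨P.iseqv.symm h.1, h.2.symm⟩,
    fun h1 h2 => ⟨P.iseqv.trans h1.1 h2.1, h1.2.trans h2.2⟩⟩⟩

/-- Abstract refinement: `refine_f^A(S, a) = α(M(γ(a) ∪ {f(S)}))`. -/
def refineA [Preorder A] (al : Set (Set X) → A) (ga : A → Set (Set X))
    (f : Op X) (S : Fin f.1 → Set X) (a : A) : A :=
  al (mClose (ga a ∪ {f.2 S}))

/-- Abstract refiners: tuples in `γ(a)^n` whose refinement is strictly below `a`. -/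
def refinersA [Preorder A] (al : Set (Set X) → A) (ga : A → Set (Set X))
    (f : Op X) (a : A) : Set (Fin f.1 → Set X) :=
  {S | (∀ i, S i ∈ ga a) ∧ refineA al ga f S a < a}

/-- One step of the GPT algorithm: refine by some refiner of some `f ∈ F`. -/
def StepA [Preorder A] (F : Set (Op X)) (al : Set (Set X) → A) (ga : A → Set (Set X))
    (a b : A) : Prop :=
  ∃ f ∈ F, ∃ S : Fin f.1 → Set X, S ∈ refinersA al ga f a ∧ b = refineA al ga f S a

/-- The setoid induced by a collection of sets: `s ≡ t` iff no set of the
collection separates them. -/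
def indSetoid (C : Set (Set X)) : Setoid X :=
  ⟨fun s t => ∀ T ∈ C, (s ∈ T ↔ t ∈ T),
   ⟨fun _ _ _ => Iff.rfl, fun h T hT => (h T hT).symm,
    fun h1 h2 T hT => (h1 T hT).trans (h2 T hT)⟩⟩

/-- The block of `P` containing `s`. -/
def blockOf (P : Setoid X) (s : X) : Set X := {t | P.r s t}

/-- The existential-until operator `EU(S₁, S₂)`. -/
def EUset (r : X → X → Prop) (S1 S2 : Set X) : Set X :=
  S2 ∪ {s | s ∈ S1 ∧ ∃ (n : ℕ) (p : ℕ → X), p 0 = s ∧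
    (∀ i < n, p i ∈ S1 ∧ r (p i) (p (i+1))) ∧ p n ∈ S2}

/-!
For every element `b` of the domain, `γ(b)` is forward `F`-complete exactly when `b` has no
abstract refiner. Either hypothesis on `F` makes `γ(c)` forward complete for `c = α(S_F(γ(a)))`,
and an element below `a` whose image under `γ` is forward complete stays below every element
obtained from `a` by refinement; hence `c` is below the final element `b` of a run. Conversely `b`
has no refiner and lies below `a`, so `γ(b)` is a forward complete Moore family containing `γ(a)`;
it therefore contains `S_F(γ(a))`, that is, `b ≤ c`.
-/

section MooreFamilies

variable {F : Set (Op X)} {C M : Set (Set X)} {𝓜 : Set (Set (Set X))}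

theorem isMoore_sInter (h𝓜 : ∀ M ∈ 𝓜, IsMoore M) : IsMoore (⋂₀ 𝓜) :=
  fun S hS M hM => h𝓜 M hM S fun _ hT => hS hT M hM

theorem isMoore_mClose (C : Set (Set X)) : IsMoore (mClose C) :=
  isMoore_sInter fun _ hM => hM.1

theorem mClose_subset_iff (hM : IsMoore M) : mClose C ⊆ M ↔ C ⊆ M :=
  ⟨fun h => (Set.subset_sInter fun _ hN => hN.2).trans h, fun h => Set.sInter_subset_of_mem ⟨hM, h⟩⟩

theorem fComplete_iff :
    FComplete F M ↔ ∀ f ∈ F, ∀ S : Fin f.1 → Set X, (∀ i, S i ∈ M) → f.2 S ∈ M := by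
  constructor
  · exact fun h f hf S hS => h ⟨f, hf, S, hS, rfl⟩
  · rintro h _ ⟨f, hf, S, hS, rfl⟩
    exact h f hf S hS

theorem isMoore_shellF (F : Set (Op X)) (C : Set (Set X)) : IsMoore (shellF F C) :=
  isMoore_sInter fun _ hM => hM.1

theorem fComplete_shellF (F : Set (Op X)) (C : Set (Set X)) : FComplete F (shellF F C) :=
  fComplete_iff.2 fun f hf S hS M hM =>
    fComplete_iff.1 hM.2.1 f hf S fun i => hS i M hM

theorem subset_shellF (F : Set (Op X)) (C : Set (Set X)) : C ⊆ shellF F C :=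
  Set.subset_sInter fun _ hM => hM.2.2

theorem shellF_subset (hM : IsMoore M) (hFM : FComplete F M) (hCM : C ⊆ M) : shellF F C ⊆ M :=
  Set.sInter_subset_of_mem ⟨hM, hFM, hCM⟩

end MooreFamilies

/-- A Galois insertion `(al, ga)` of `A` into the dual lattice of Moore families on `X`. The map
`al` is defined on all collections of subsets, but only its values on Moore families are
constrained. -/
structure IsMooreInsertion [Preorder A] (al : Set (Set X) → A) (ga : A → Set (Set X)) : Prop where
  isMoore_ga : ∀ a, IsMoore (ga a)
  le_al_iff : ∀ M, IsMoore M → ∀ a, a ≤ al M ↔ M ⊆ ga a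
  al_ga : ∀ a, al (ga a) = a

namespace IsMooreInsertion

variable [Preorder A] {al : Set (Set X) → A} {ga : A → Set (Set X)}
  {F : Set (Op X)} {f : Op X} {S : Fin f.1 → Set X} {C M : Set (Set X)} {a b c : A}

theorem subset_ga_al (h : IsMooreInsertion al ga) (hM : IsMoore M) : M ⊆ ga (al M) :=
  (h.le_al_iff M hM _).1 le_rfl

theorem ga_subset_ga_iff (h : IsMooreInsertion al ga) : ga a ⊆ ga b ↔ b ≤ a := by
  rw [← h.le_al_iff _ (h.isMoore_ga a), h.al_ga]

theorem le_al_mClose_iff (h : IsMooreInsertion al ga) : a ≤ al (mClose C) ↔ C ⊆ ga a :=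
  (h.le_al_iff _ (isMoore_mClose C) a).trans (mClose_subset_iff (h.isMoore_ga a))

theorem le_refineA_iff (h : IsMooreInsertion al ga) :
    c ≤ refineA al ga f S b ↔ c ≤ b ∧ f.2 S ∈ ga c := by
  rw [refineA, h.le_al_mClose_iff, Set.union_subset_iff, h.ga_subset_ga_iff,
    Set.singleton_subset_iff]

theorem refineA_le (h : IsMooreInsertion al ga) : refineA al ga f S b ≤ b :=
  (h.le_refineA_iff.1 le_rfl).1

theorem mem_refinersA_iff (h : IsMooreInsertion al ga) :
    S ∈ refinersA al ga f b ↔ (∀ i, S i ∈ ga b) ∧ f.2 S ∉ ga b := by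
  simp only [refinersA, Set.mem_ofPred_eq, lt_iff_le_not_ge, h.refineA_le, h.le_refineA_iff,
    le_rfl, true_and]

theorem fComplete_ga_iff (h : IsMooreInsertion al ga) :
    FComplete F (ga b) ↔ ∀ f ∈ F, refinersA al ga f b = ∅ := by
  simp only [fComplete_iff, Set.eq_empty_iff_forall_notMem, h.mem_refinersA_iff, not_and, not_not]

theorem fComplete_ga_al_of_al_imageF_le (h : IsMooreInsertion al ga) (hM : IsMoore M)
    (hFM : FComplete F M)
    (hle : al (mClose (imageF F M)) ≤ al (mClose (imageF F (ga (al M))))) :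
    FComplete F (ga (al M)) :=
  h.le_al_mClose_iff.1 <| (h.le_al_mClose_iff.2 <| hFM.trans <| h.subset_ga_al hM).trans hle

theorem fComplete_ga_al_of_mem_range (h : IsMooreInsertion al ga) (hFM : FComplete F M)
    (hM : M ∈ Set.range ga) : FComplete F (ga (al M)) := by
  obtain ⟨b, rfl⟩ := hM
  rwa [h.al_ga]

theorem fComplete_ga_al_shellF (h : IsMooreInsertion al ga)
    (hcond : (∀ M, IsMoore M →
        al (mClose (imageF F M)) = al (mClose (imageF F (ga (al M))))) ∨
      (∀ a, shellF F (ga a) ∈ Set.range ga)) (a : A) :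
    FComplete F (ga (al (shellF F (ga a)))) := by
  have hM := isMoore_shellF F (ga a)
  have hFM := fComplete_shellF F (ga a)
  rcases hcond with himage | hrange
  · exact h.fComplete_ga_al_of_al_imageF_le hM hFM (himage _ hM).le
  · exact h.fComplete_ga_al_of_mem_range hFM (hrange a)

theorem al_shellF_le (h : IsMooreInsertion al ga) : al (shellF F (ga a)) ≤ a :=
  h.ga_subset_ga_iff.1 <|
    (subset_shellF F (ga a)).trans (h.subset_ga_al (isMoore_shellF F (ga a)))

theorem le_al_shellF (h : IsMooreInsertion al ga) (hFb : FComplete F (ga b)) (hba : b ≤ a) :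
    b ≤ al (shellF F (ga a)) :=
  (h.le_al_iff _ (isMoore_shellF F (ga a)) b).2 <|
    shellF_subset (h.isMoore_ga b) hFb (h.ga_subset_ga_iff.2 hba)

theorem le_of_stepA_of_fComplete (h : IsMooreInsertion al ga) (hFc : FComplete F (ga c))
    (hca : c ≤ a) (hab : StepA F al ga a b) : c ≤ b := by
  obtain ⟨f, hf, S, hS, rfl⟩ := hab
  have hSc : ∀ i, S i ∈ ga c := fun i => h.ga_subset_ga_iff.2 hca (hS.1 i)
  exact h.le_refineA_iff.2 ⟨hca, fComplete_iff.1 hFc f hf S hSc⟩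

end IsMooreInsertion

section Runs

variable {F : Set (Op X)} {al : Set (Set X) → A} {ga : A → Set (Set X)} {a b c : A}

theorem StepA.lt [Preorder A] (hab : StepA F al ga a b) : b < a := by
  obtain ⟨f, -, S, hS, rfl⟩ := hab
  exact hS.2

theorem le_of_reflTransGen_stepA [Preorder A]
    (hrun : Relation.ReflTransGen (StepA F al ga) a b) : b ≤ a := by
  induction hrun with
  | refl => exact le_rfl
  | tail _ hstep ih => exact hstep.lt.le.trans ih

theorem IsMooreInsertion.le_of_reflTransGen_stepA_of_fComplete [Preorder A]
    (h : IsMooreInsertion al ga) (hFc : FComplete F (ga c)) (hca : c ≤ a)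
    (hrun : Relation.ReflTransGen (StepA F al ga) a b) : c ≤ b := by
  induction hrun with
  | refl => exact hca
  | tail _ hstep ih => exact h.le_of_stepA_of_fComplete hFc ih hstep

theorem IsMooreInsertion.eq_al_shellF_of_reflTransGen_stepA [PartialOrder A]
    (h : IsMooreInsertion al ga) (hshell : FComplete F (ga (al (shellF F (ga a)))))
    (hrun : Relation.ReflTransGen (StepA F al ga) a b)
    (hend : ∀ f ∈ F, refinersA al ga f b = ∅) : b = al (shellF F (ga a)) :=
  le_antisymm
    (h.le_al_shellF (h.fComplete_ga_iff.2 hend) (le_of_reflTransGen_stepA hrun))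
    (h.le_of_reflTransGen_stepA_of_fComplete hshell h.al_shellF_le hrun)

theorem reflTransGen_of_forall_lt_succ {r : A → A → Prop} {n : ℕ} {seq : ℕ → A}
    (hstep : ∀ i < n, r (seq i) (seq (i + 1))) : Relation.ReflTransGen r (seq 0) (seq n) :=
  (reflTransGen_of_succ_of_le (fun i j => r (seq i) (seq j)) (fun i hi => hstep i hi.2)
    n.zero_le).lift seq fun _ _ => id

end Runs

theorem stmt2_general [PartialOrder A] {al : Set (Set X) → A} {ga : A → Set (Set X)}
    (h : IsMooreInsertion al ga) {F : Set (Op X)} {g : Op X} (hgF : g ∈ F)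
    {sub : A → Set (Fin g.1 → Set X)}
    (hsub : ∀ b, sub b ⊆ refinersA al ga g b)
    (hsub_empty : ∀ b, sub b = ∅ → refinersA al ga g b = ∅)
    {n : ℕ} {seq : ℕ → A}
    (hshell : FComplete F (ga (al (shellF F (ga (seq 0))))))
    (hstep : ∀ i < n,
      (∃ S ∈ sub (seq i), seq (i + 1) = refineA al ga g S (seq i)) ∨
      (∃ f ∈ F, f ≠ g ∧ ∃ S ∈ refinersA al ga f (seq i),
        seq (i + 1) = refineA al ga f S (seq i)))
    (hend1 : sub (seq n) = ∅)
    (hend2 : ∀ f ∈ F, f ≠ g → refinersA al ga f (seq n) = ∅) :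
    seq n = al (shellF F (ga (seq 0))) := by
  have hstepA : ∀ i < n, StepA F al ga (seq i) (seq (i + 1)) := by
    intro i hi
    rcases hstep i hi with ⟨S, hS, hseq⟩ | ⟨f, hf, -, hseq⟩
    · exact ⟨g, hgF, S, hsub _ hS, hseq⟩
    · exact ⟨f, hf, hseq⟩
  have hend : ∀ f ∈ F, refinersA al ga f (seq n) = ∅ := by
    intro f hf
    rcases eq_or_ne f g with rfl | hfg
    · exact hsub_empty _ hend1
    · exact hend2 f hf hfg
  exact h.eq_al_shellF_of_reflTransGen_stepA hshell (reflTransGen_of_forall_lt_succ hstepA) hend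

theorem stmt2 [CompleteLattice A]
    (hdcc : ∀ g : ℕ → A, ¬ StrictAnti g)
    (al : Set (Set X) → A) (ga : A → Set (Set X))
    (hga : ∀ a : A, IsMoore (ga a))
    (hadj : ∀ M : Set (Set X), IsMoore M → ∀ a : A, a ≤ al M ↔ M ⊆ ga a)
    (hins : ∀ a : A, al (ga a) = a)
    (F : Set (Op X))
    (hcond : (∀ M : Set (Set X), IsMoore M →
                al (mClose (imageF F M)) = al (mClose (imageF F (ga (al M))))) ∨
             (∀ a : A, shellF F (ga a) ∈ Set.range ga))
    (g : Op X) (hgF : g ∈ F)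
    (sub : A → Set (Fin g.1 → Set X))
    (hsub : ∀ b : A, sub b ⊆ refinersA al ga g b)
    (hsubeq : ∀ b : A, sub b = ∅ ↔ refinersA al ga g b = ∅)
    (a : A) (n : ℕ) (seq : ℕ → A) (h0 : seq 0 = a)
    (hstep : ∀ i < n,
      (∃ S ∈ sub (seq i), seq (i + 1) = refineA al ga g S (seq i)) ∨
      (∃ f ∈ F, f ≠ g ∧ ∃ S ∈ refinersA al ga f (seq i),
        seq (i + 1) = refineA al ga f S (seq i)))
    (hend1 : sub (seq n) = ∅)
    (hend2 : ∀ f ∈ F, f ≠ g → refinersA al ga f (seq n) = ∅) :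
    seq n = al (shellF F (ga a)) := by
  subst h0
  have h : IsMooreInsertion al ga := ⟨hga, hadj, hins⟩
  exact stmt2_general h hgF hsub (fun b => (hsubeq b).1) (h.fComplete_ga_al_shellF hcond _)
    hstep hend1 hend2
end

section
/- Let Σ be a set, 𝒜 a disjunctive Moore family on Σ with closure μ, S ⊆ Σ, and 𝒜' = D(𝒜 ∪ {S}) with closure μ'. Then for all x, y ∈ Σ: (a) if x ∈ S then μ'({x}) = μ({x}) ∩ S, and if x ∉ S then μ'({x}) = μ({x}); (b) μ'({x}) ⊆ μ'({y}) if and only if μ({x}) ⊆ μ({y}) and (y ∈ S implies x ∈ S). -/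
universe u v

variable {X : Type u} {A : Type v}

/-! Fix points `x` and `z`. The sets `T` such that `x ∈ T` implies `z ∈ T` form a disjunctive Moore
family, so if all generators satisfy this implication, then so does every member of the generated
disjunctive family. Closures of points can therefore be computed from the generators alone, and
the generator `S` contributes only its own implication `x ∈ S → z ∈ S`. -/

section

variable {C D : Set (Set X)} {R S T : Set X} {x z : X}

theorem subset_mu : T ⊆ mu C T :=
  Set.subset_sInter fun _ hU => hU.2

theorem mu_subset_of_mem (hS : S ∈ C) (hTS : T ⊆ S) : mu C T ⊆ S :=
  Set.sInter_subset_of_mem ⟨hS, hTS⟩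

theorem mu_subset_mu_iff : mu C R ⊆ mu C T ↔ R ⊆ mu C T :=
  ⟨subset_mu.trans, fun h => Set.subset_sInter fun _ hU =>
    mu_subset_of_mem hU.1 (h.trans (mu_subset_of_mem hU.1 hU.2))⟩

theorem mem_mu_singleton : z ∈ mu C {x} ↔ ∀ T ∈ C, x ∈ T → z ∈ T := by
  simp only [mu, Set.mem_sInter, Set.mem_ofPred_eq, Set.singleton_subset_iff, and_imp]

theorem mu_singleton_subset_mu_singleton_iff :
    mu C {x} ⊆ mu C {z} ↔ ∀ T ∈ C, z ∈ T → x ∈ T := by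
  rw [mu_subset_mu_iff, Set.singleton_subset_iff, mem_mu_singleton]

theorem mu_anti (h : C ⊆ D) : mu D T ⊆ mu C T :=
  Set.sInter_subset_sInter fun _ hU => ⟨h hU.1, hU.2⟩

theorem mu_union : mu (C ∪ D) T = mu C T ∩ mu D T := by
  simp only [mu, Set.mem_union, or_and_right, Set.ofPred_or, Set.sInter_union]

theorem mu_singleton_of_subset (h : T ⊆ S) : mu {S} T = S :=
  (mu_subset_of_mem (Set.mem_singleton S) h).antisymm
    (Set.subset_sInter fun _ hU => (Set.mem_singleton_iff.1 hU.1).ge)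

theorem mu_singleton_of_not_subset (h : ¬T ⊆ S) : mu {S} T = Set.univ :=
  Set.sInter_eq_univ.2 fun _ hU => absurd (Set.mem_singleton_iff.1 hU.1 ▸ hU.2) h

theorem subset_dClose : C ⊆ dClose C :=
  Set.subset_sInter fun _ hN => hN.2

theorem dClose_subset (hD : IsDisjMoore D) (h : C ⊆ D) : dClose C ⊆ D :=
  Set.sInter_subset_of_mem ⟨hD, h⟩

theorem isDisjMoore_mem_imp_mem (x z : X) : IsDisjMoore {T | x ∈ T → z ∈ T} :=
  ⟨fun _ hF hx T hT => hF hT (hx T hT), fun _ hF ⟨T, hT, hx⟩ => ⟨T, hT, hF hT hx⟩⟩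

theorem mu_dClose_singleton : mu (dClose C) {x} = mu C {x} := by
  refine (mu_anti subset_dClose).antisymm fun z hz => mem_mu_singleton.2 ?_
  exact dClose_subset (isDisjMoore_mem_imp_mem x z) (mem_mu_singleton.1 hz)

end

theorem stmt13_general (M : Set (Set X)) (S : Set X) (x y : X) :
    (x ∈ S → mu (dClose (M ∪ {S})) {x} = mu M {x} ∩ S) ∧
    (x ∉ S → mu (dClose (M ∪ {S})) {x} = mu M {x}) ∧
    (mu (dClose (M ∪ {S})) {x} ⊆ mu (dClose (M ∪ {S})) {y} ↔
      (mu M {x} ⊆ mu M {y} ∧ (y ∈ S → x ∈ S))) := by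
  simp only [mu_dClose_singleton]
  refine ⟨fun hx => ?_, fun hx => ?_, ?_⟩
  · rw [mu_union, mu_singleton_of_subset (Set.singleton_subset_iff.2 hx)]
  · rw [mu_union, mu_singleton_of_not_subset (mt Set.singleton_subset_iff.1 hx), Set.inter_univ]
  · simp only [mu_singleton_subset_mu_singleton_iff, Set.mem_union, Set.mem_singleton_iff,
      or_imp, forall_and, forall_eq]

theorem stmt13 (M : Set (Set X)) (hM : IsDisjMoore M) (S : Set X) (x y : X) :
    (x ∈ S → mu (dClose (M ∪ {S})) {x} = mu M {x} ∩ S) ∧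
    (x ∉ S → mu (dClose (M ∪ {S})) {x} = mu M {x}) ∧
    (mu (dClose (M ∪ {S})) {x} ⊆ mu (dClose (M ∪ {S})) {y} ↔
      (mu M {x} ⊆ mu M {y} ∧ (y ∈ S → x ∈ S))) :=
  stmt13_general M S x y
end

section
/- Let Σ be a set. For every Moore family ℳ on Σ and every partition P of Σ: every member of ℳ is P-saturated (i.e. ℳ ⊆ pad(P)) if and only if P refines pr(ℳ). Moreover, pr(pad(P)) = P for every partition P. (Hence pr and pad form a Galois insertion of the dual lattice of partitions of Σ into the dual lattice of Moore families on Σ.) -/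
universe u v

variable {X : Type u} {A : Type v}

/-
Two points have the same closure exactly when no member of `M` separates them. Hence
`M ⊆ padS P` and `refines P (prS M)` both say that no member of `M` separates two `P`-related
points. Moreover, the block of `s` is itself saturated, and it separates `s` from every point
not related to it, so the saturated sets determine `P`.
-/

theorem mu_subset_mu_iff_s15 {M : Set (Set X)} {S T : Set X} :
    mu M S ⊆ mu M T ↔ S ⊆ mu M T := by
  have subset_mu : S ⊆ mu M S := Set.subset_sInter fun _ hU => hU.2
  refine ⟨subset_mu.trans, fun h => Set.subset_sInter fun U hU => ?_⟩
  have hSU : S ⊆ U := h.trans (Set.sInter_subset_of_mem hU)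
  exact Set.sInter_subset_of_mem ⟨hU.1, hSU⟩

theorem mem_mu_singleton_iff {M : Set (Set X)} {s t : X} :
    t ∈ mu M {s} ↔ ∀ T ∈ M, s ∈ T → t ∈ T := by
  simp only [mu, Set.mem_sInter, Set.mem_ofPred_eq, Set.singleton_subset_iff, and_imp]

theorem mu_singleton_eq_iff {M : Set (Set X)} {s t : X} :
    mu M {s} = mu M {t} ↔ ∀ T ∈ M, (s ∈ T ↔ t ∈ T) := by
  rw [Set.Subset.antisymm_iff, mu_subset_mu_iff_s15, mu_subset_mu_iff_s15, Set.singleton_subset_iff,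
    Set.singleton_subset_iff, mem_mu_singleton_iff, mem_mu_singleton_iff]
  exact ⟨fun h T hT => ⟨h.2 T hT, h.1 T hT⟩,
    fun h => ⟨fun T hT => (h T hT).2, fun T hT => (h T hT).1⟩⟩

theorem prS_eq_indSetoid (M : Set (Set X)) : prS M = indSetoid M :=
  Setoid.ext fun _ _ => mu_singleton_eq_iff

theorem mem_padS_iff {P : Setoid X} {S : Set X} :
    S ∈ padS P ↔ ∀ s t, P.r s t → (s ∈ S ↔ t ∈ S) :=
  ⟨fun hS s t hst => ⟨fun hs => hS s hs t hst, fun ht => hS t ht s (P.symm hst)⟩,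
    fun h s hs t hst => (h s t hst).1 hs⟩

theorem blockOf_mem_padS (P : Setoid X) (s : X) : blockOf P s ∈ padS P :=
  fun _ hst _ htu => P.trans hst htu

theorem subset_padS_iff_refines_indSetoid {C : Set (Set X)} {P : Setoid X} :
    C ⊆ padS P ↔ refines P (indSetoid C) :=
  ⟨fun h s t hst _ hT => mem_padS_iff.1 (h hT) s t hst,
    fun h T hT => mem_padS_iff.2 fun s t hst => h s t hst T hT⟩

theorem indSetoid_padS (P : Setoid X) : indSetoid (padS P) = P := by
  refine Setoid.ext fun s t => ⟨fun hst => ?_, fun hst => ?_⟩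
  · exact (hst (blockOf P s) (blockOf_mem_padS P s)).1 (P.refl s)
  · exact subset_padS_iff_refines_indSetoid.1 Set.Subset.rfl s t hst

theorem stmt15_general :
    (∀ (M : Set (Set X)) (P : Setoid X), M ⊆ padS P ↔ refines P (prS M)) ∧
    (∀ P : Setoid X, prS (padS P) = P) := by
  simp only [prS_eq_indSetoid]
  exact ⟨fun _ _ => subset_padS_iff_refines_indSetoid, indSetoid_padS⟩

theorem stmt15 :
    (∀ M : Set (Set X), IsMoore M → ∀ P : Setoid X,
      (M ⊆ padS P ↔ refines P (prS M))) ∧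
    (∀ P : Setoid X, prS (padS P) = P) :=
  ⟨fun M _ P => stmt15_general.1 M P, stmt15_general.2⟩
end

section
/- Let Σ be a set, 𝒜 a disjunctive Moore family on Σ with closure μ, and f : ℘(Σ) → ℘(Σ) a function preserving arbitrary unions (such as the predecessor operator pre of a transition relation). Then f(X) ∈ 𝒜 for every X ∈ 𝒜 if and only if f(μ({s})) ∈ 𝒜 for every s ∈ Σ. (Hence, in refining a disjunctive abstract domain towards forward completeness for f, it suffices to use as refiners the closures of the blocks of the induced partition.) -/
universe u v

variable {X : Type u} {A : Type v}

theorem IsMoore.mu_mem {M : Set (Set X)} (hM : IsMoore M) (S : Set X) : mu M S ∈ M :=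
  hM _ fun _ hT => hT.1

theorem subset_mu_s19 (M : Set (Set X)) (S : Set X) : S ⊆ mu M S :=
  Set.subset_sInter fun _ hT => hT.2

theorem mu_subset {M : Set (Set X)} {S T : Set X} (hT : T ∈ M) (hST : S ⊆ T) : mu M S ⊆ T :=
  Set.sInter_subset_of_mem ⟨hT, hST⟩

theorem sUnion_image_mu_singleton {M : Set (Set X)} {T : Set X} (hT : T ∈ M) :
    ⋃₀ ((fun s => mu M {s}) '' T) = T := by
  apply Set.Subset.antisymm
  · rw [Set.sUnion_image]
    exact Set.iUnion₂_subset fun s hs => mu_subset hT (Set.singleton_subset_iff.2 hs)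
  · exact fun s hs => ⟨mu M {s}, Set.mem_image_of_mem _ hs, subset_mu_s19 M {s} rfl⟩

theorem map_eq_iSup_map_mu_singleton {α : Type*} [CompleteLattice α] {f : Set X → α}
    (hf : ∀ C : Set (Set X), f (⋃₀ C) = ⨆ S ∈ C, f S) {M : Set (Set X)} {T : Set X}
    (hT : T ∈ M) : f T = ⨆ s ∈ T, f (mu M {s}) :=
  calc f T = f (⋃₀ ((fun s => mu M {s}) '' T)) := by rw [sUnion_image_mu_singleton hT]
    _ = ⨆ S ∈ (fun s => mu M {s}) '' T, f S := hf _
    _ = ⨆ s ∈ T, f (mu M {s}) := iSup_image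

theorem stmt19_general {α : Type*} [CompleteLattice α] {M : Set (Set X)} (hM : IsMoore M)
    {N : Set α} (hN : ∀ S ⊆ N, sSup S ∈ N) {f : Set X → α}
    (hf : ∀ C : Set (Set X), f (⋃₀ C) = ⨆ S ∈ C, f S) :
    (∀ T ∈ M, f T ∈ N) ↔ ∀ s : X, f (mu M {s}) ∈ N := by
  refine ⟨fun h s => h _ (hM.mu_mem {s}), fun h T hT => ?_⟩
  rw [map_eq_iSup_map_mu_singleton hf hT, ← sSup_image]
  exact hN _ (Set.image_subset_iff.2 fun s _ => h s)

theorem stmt19 (M : Set (Set X)) (hM : IsDisjMoore M)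
    (f : Set X → Set X)
    (hf : ∀ C : Set (Set X), f (⋃₀ C) = ⋃ S ∈ C, f S) :
    (∀ T ∈ M, f T ∈ M) ↔ (∀ s : X, f (mu M {s}) ∈ M) :=
  stmt19_general hM.1 hM.2 hf
end
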